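/- arXiv:2508.03074 — 10 statements merged into one kernel-verified Lean document; each statement's English description precedes it below -/
import Mathlib

section
/- Let I_k = ∫₀^∞ λ^k e^{-λ} e^{-λ²/2} dλ for a natural number k. For every integer k ≥ 2, I_{k+1} ≤ √(3(k+1)·log(k+1)) · I_k + 1. -/
/-!
The stronger bound `I (k+1) ≤ √(k+1) · I k` holds for every `k`. Integrating the derivative of
`x^(k+1) e^{-x} e^{-x²/2}` over `(0, ∞)` gives the recurrence `I (k+2) + I (k+1) = (k+1) I k`
(`I_recurrence`), so `I (k+2) ≤ (k+1) I k`. With `s = √(k+1)`, the nonnegativity of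
`∫ x^k (x - s)² e^{-x} e^{-x²/2} = I (k+2) - 2 s I (k+1) + s² I k` then yields
`2 s I (k+1) ≤ 2 s² I k`. For `k ≥ 2` one has `log (k+1) ≥ 1/3`, so the factor in the theorem is
at least `√(k+1)`.
-/

open MeasureTheory

/-- `I k = ∫₀^∞ λ^k e^{-λ} e^{-λ²/2} dλ`. -/
noncomputable def I (k : ℕ) : ℝ :=
  ∫ x in Set.Ioi (0 : ℝ), x ^ k * Real.exp (-x) * Real.exp (-x ^ 2 / 2)

lemma integrableOn_I (k : ℕ) : IntegrableOn
    (fun x : ℝ => x ^ k * Real.exp (-x) * Real.exp (-x ^ 2 / 2)) (Set.Ioi 0) := by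
  have h := Real.GammaIntegral_convergent (s := (k : ℝ) + 1) (by positivity)
  refine Integrable.mono' h (by fun_prop) ?_
  refine (ae_restrict_iff' measurableSet_Ioi).2 (Filter.Eventually.of_forall fun x hx => ?_)
  have hx : 0 < x := hx
  have h1 : Real.exp (-x ^ 2 / 2) ≤ 1 := Real.exp_le_one_iff.2 (by nlinarith [sq_nonneg x])
  rw [add_sub_cancel_right, Real.rpow_natCast, Real.norm_of_nonneg (by positivity),
    mul_comm (Real.exp (-x))]
  exact mul_le_of_le_one_right (by positivity) h1

lemma I_nonneg (k : ℕ) : 0 ≤ I k :=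
  setIntegral_nonneg measurableSet_Ioi fun x hx => by
    have hx : 0 < x := hx
    positivity

/-- Integration by parts against `e^{-x} e^{-x²/2}`, whose logarithmic derivative is `-(1 + x)`. -/
lemma I_recurrence (k : ℕ) : I (k + 2) + I (k + 1) = ((k : ℝ) + 1) * I k := by
  have hd : ∀ x : ℝ, HasDerivAt
      (fun x : ℝ => x ^ (k + 1) * Real.exp (-x) * Real.exp (-x ^ 2 / 2))
      (((k : ℝ) + 1) * (x ^ k * Real.exp (-x) * Real.exp (-x ^ 2 / 2))
        - x ^ (k + 1) * Real.exp (-x) * Real.exp (-x ^ 2 / 2)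
        - x ^ (k + 2) * Real.exp (-x) * Real.exp (-x ^ 2 / 2)) x := by
    intro x
    have h1 := hasDerivAt_pow (k + 1) x
    have h2 := (hasDerivAt_neg x).exp
    have h3 := (((hasDerivAt_pow 2 x).neg).div_const 2).exp
    refine ((h1.mul h2).mul h3).congr_deriv ?_
    simp only [Pi.neg_apply, Pi.mul_apply, Nat.add_sub_cancel]
    push_cast
    ring
  have ht : Filter.Tendsto
      (fun x : ℝ => x ^ (k + 1) * Real.exp (-x) * Real.exp (-x ^ 2 / 2))
      Filter.atTop (nhds 0) := by
    refine tendsto_of_tendsto_of_tendsto_of_le_of_le' tendsto_const_nhds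
      (Real.tendsto_pow_mul_exp_neg_atTop_nhds_zero (k + 1)) ?_ ?_
    · filter_upwards [Filter.eventually_ge_atTop 0] with x hx
      positivity
    · filter_upwards [Filter.eventually_ge_atTop 0] with x hx
      exact mul_le_of_le_one_right (by positivity)
        (Real.exp_le_one_iff.2 (by nlinarith [sq_nonneg x]))
  have h0 := (integrableOn_I k).const_mul ((k : ℝ) + 1)
  have h := integral_Ioi_of_hasDerivAt_of_tendsto' (a := 0) (fun x _ => hd x)
    ((h0.sub (integrableOn_I (k + 1))).sub (integrableOn_I (k + 2))) ht
  have h01 : Integrable (fun x : ℝ => ((k : ℝ) + 1) * (x ^ k * Real.exp (-x) *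
      Real.exp (-x ^ 2 / 2)) - x ^ (k + 1) * Real.exp (-x) * Real.exp (-x ^ 2 / 2))
      (volume.restrict (Set.Ioi 0)) := h0.sub (integrableOn_I (k + 1))
  rw [integral_sub h01 (integrableOn_I (k + 2)), integral_sub h0 (integrableOn_I (k + 1)), integral_const_mul] at h
  change ((k : ℝ) + 1) * I k - I (k + 1) - I (k + 2) = _ at h
  simp at h
  linarith

lemma I_quadratic_nonneg (k : ℕ) (s : ℝ) :
    0 ≤ I (k + 2) - 2 * s * I (k + 1) + s ^ 2 * I k := by
  have h1 := (integrableOn_I (k + 1)).const_mul (2 * s)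
  have h0 := (integrableOn_I k).const_mul (s ^ 2)
  have h21 : Integrable (fun x : ℝ => x ^ (k + 2) * Real.exp (-x) * Real.exp (-x ^ 2 / 2) -
      2 * s * (x ^ (k + 1) * Real.exp (-x) * Real.exp (-x ^ 2 / 2)))
      (volume.restrict (Set.Ioi 0)) := (integrableOn_I (k + 2)).sub h1
  unfold I
  rw [← integral_const_mul, ← integral_const_mul, ← integral_sub (integrableOn_I (k + 2)) h1,
    ← integral_add h21 h0]
  refine setIntegral_nonneg measurableSet_Ioi fun x hx => ?_
  have hx : 0 < x := hx
  have : 0 ≤ x ^ k * (x - s) ^ 2 * Real.exp (-x) * Real.exp (-x ^ 2 / 2) := by positivity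
  refine this.trans_eq ?_
  ring

lemma I_succ_le (k : ℕ) : I (k + 1) ≤ Real.sqrt ((k : ℝ) + 1) * I k := by
  have hs : 0 < Real.sqrt ((k : ℝ) + 1) := Real.sqrt_pos.2 (by positivity)
  have hsq : Real.sqrt ((k : ℝ) + 1) ^ 2 = (k : ℝ) + 1 := Real.sq_sqrt (by positivity)
  have hq := I_quadratic_nonneg k (Real.sqrt ((k : ℝ) + 1))
  have hr := I_recurrence k
  have hn := I_nonneg (k + 1)
  rw [← hsq] at hr
  refine le_of_mul_le_mul_left ?_ hs
  linarith

/-- For every integer `k ≥ 2`, `I (k+1) ≤ √(3(k+1)·log(k+1)) · I k + 1`. -/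
theorem stmt0 (k : ℕ) (hk : 2 ≤ k) :
    I (k + 1) ≤ Real.sqrt (3 * ((k : ℝ) + 1) * Real.log ((k : ℝ) + 1)) * I k + 1 := by
  have hk' : (2 : ℝ) ≤ k := by exact_mod_cast hk
  -- `log (k+1) ≥ 1 - 1/(k+1) ≥ 2/3`
  have hlog : 1 / 3 ≤ Real.log ((k : ℝ) + 1) := by
    have h := Real.one_sub_inv_le_log_of_pos (x := (k : ℝ) + 1) (by positivity)
    have h' : ((k : ℝ) + 1)⁻¹ ≤ 3⁻¹ := inv_anti₀ (by norm_num) (by linarith)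
    linarith
  have hle : Real.sqrt ((k : ℝ) + 1)
      ≤ Real.sqrt (3 * ((k : ℝ) + 1) * Real.log ((k : ℝ) + 1)) :=
    Real.sqrt_le_sqrt (by nlinarith)
  have := mul_le_mul_of_nonneg_right hle (I_nonneg k)
  linarith [I_succ_le k]
end

section
/- Let K ≥ 2, let λ₁ > λ₂ > … > λ_K > 0 be real numbers, and let p₁, …, p_K > 0 with ∑_j p_j = 1. Define P₀(s) = (∑_{j=1}^K p_j λ_j^s e^{-2λ_j}) / (∑_{j=1}^K p_j λ_j^s e^{-λ_j}) for natural numbers s. Then P₀ is strictly decreasing: P₀(k+1) < P₀(k) for every natural number k. -/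
/-!
Put `wⱼ = pⱼ λⱼ^k e^{-λⱼ} > 0` and `gⱼ = e^{-λⱼ}`. After clearing the positive denominators the claim
reads `(∑ w λ g) (∑ w) < (∑ w g) (∑ w λ)`: under the weights `w`, the rate `λ` and its decreasing
function `g` are strictly negatively correlated. This is the strict form of Chebyshev's sum
inequality (`weighted_chebyshev_strict`), which follows by writing twice the difference of the two
sides as `∑ᵢ ∑ⱼ wᵢ wⱼ (λᵢ - λⱼ) (gᵢ - gⱼ)`, whose terms are nonpositive and not all zero, since
there are at least two distinct rates.
-/

/-- Strict weighted Chebyshev sum inequality for two oppositely ordered families. -/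
lemma weighted_chebyshev_strict {ι : Type*} [Fintype ι] (w f g : ι → ℝ) (hw : ∀ i, 0 < w i)
    (hfg : ∀ i j, (f i - f j) * (g i - g j) ≤ 0)
    (hstrict : ∃ i j, (f i - f j) * (g i - g j) < 0) :
    (∑ i, w i * f i * g i) * ∑ i, w i < (∑ i, w i * g i) * ∑ i, w i * f i := by
  have key : ∑ i, ∑ j, w i * w j * ((f i - f j) * (g i - g j)) =
      2 * ((∑ i, w i * f i * g i) * ∑ i, w i - (∑ i, w i * g i) * ∑ i, w i * f i) := by
    have expand : ∀ i j, w i * w j * ((f i - f j) * (g i - g j)) =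
        (w i * f i * g i) * w j + w i * (w j * f j * g j)
          - (w i * g i) * (w j * f j) - (w i * f i) * (w j * g j) := fun i j => by ring
    simp only [expand, Finset.sum_add_distrib, Finset.sum_sub_distrib, ← Finset.sum_mul_sum]
    ring
  have term_nonpos : ∀ i j, w i * w j * ((f i - f j) * (g i - g j)) ≤ 0 := fun i j =>
    mul_nonpos_of_nonneg_of_nonpos (mul_pos (hw i) (hw j)).le (hfg i j)
  have neg : ∑ i, ∑ j, w i * w j * ((f i - f j) * (g i - g j)) < 0 := by
    obtain ⟨i, j, hij⟩ := hstrict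
    refine Finset.sum_neg' (fun i _ => Finset.sum_nonpos fun j _ => term_nonpos i j)
      ⟨i, Finset.mem_univ i, Finset.sum_neg' (fun j _ => term_nonpos i j)
        ⟨j, Finset.mem_univ j, mul_neg_of_pos_of_neg (mul_pos (hw i) (hw j)) hij⟩⟩
  linarith

lemma sub_mul_exp_neg_sub_neg {x y : ℝ} (h : x ≠ y) :
    (x - y) * (Real.exp (-x) - Real.exp (-y)) < 0 := by
  rcases lt_or_gt_of_ne h with h | h
  · exact mul_neg_of_neg_of_pos (sub_neg.2 h) (sub_pos.2 (Real.exp_lt_exp.2 (neg_lt_neg h)))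
  · exact mul_neg_of_pos_of_neg (sub_pos.2 h) (sub_neg.2 (Real.exp_lt_exp.2 (neg_lt_neg h)))

/-- The posterior probability of zero new demand
`P₀(s) = (∑ⱼ pⱼ λⱼ^s e^{-2λⱼ}) / (∑ⱼ pⱼ λⱼ^s e^{-λⱼ})` is strictly decreasing in `s`. -/
theorem stmt4 (K : ℕ) (hK : 2 ≤ K) (l p : Fin K → ℝ)
    (hl : StrictAnti l) (hlpos : ∀ i, 0 < l i) (hp : ∀ i, 0 < p i)
    (hsum : ∑ i, p i = 1) :
    ∀ k : ℕ,
      (∑ j, p j * l j ^ (k + 1) * Real.exp (-(2 * l j))) /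
        (∑ j, p j * l j ^ (k + 1) * Real.exp (-(l j))) <
      (∑ j, p j * l j ^ k * Real.exp (-(2 * l j))) /
        (∑ j, p j * l j ^ k * Real.exp (-(l j))) := by
  intro k
  have : Nonempty (Fin K) := ⟨⟨0, by omega⟩⟩
  have pos : ∀ s : ℕ, ∀ j, 0 < p j * l j ^ s * Real.exp (-(l j)) := fun s j =>
    mul_pos (mul_pos (hp j) (pow_pos (hlpos j) s)) (Real.exp_pos _)
  have sum_pos : ∀ s : ℕ, 0 < ∑ j, p j * l j ^ s * Real.exp (-(l j)) := fun s =>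
    Finset.sum_pos (fun j _ => pos s j) Finset.univ_nonempty
  rw [div_lt_div_iff₀ (sum_pos _) (sum_pos _)]
  have h := weighted_chebyshev_strict (fun j => p j * l j ^ k * Real.exp (-(l j))) l
    (fun j => Real.exp (-(l j))) (pos k)
    (fun i j => by
      by_cases hij : l i = l j
      · simp [hij]
      · exact (sub_mul_exp_neg_sub_neg hij).le)
    ⟨⟨0, by omega⟩, ⟨1, by omega⟩, sub_mul_exp_neg_sub_neg (hl.injective.ne (by simp))⟩
  have exp_double : ∀ x : ℝ, Real.exp (-(2 * x)) = Real.exp (-x) * Real.exp (-x) := fun x => by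
    rw [← Real.exp_add]; ring_nf
  simp only [exp_double]
  refine lt_of_eq_of_lt ?_ (h.trans_eq ?_) <;> congr 1 <;>
    refine Finset.sum_congr rfl fun j _ => ?_ <;> ring
end

section
/- Let K ≥ 2, let λ₁ > λ₂ > … > λ_K > 0 be real numbers, let p₁, …, p_K > 0 with ∑_j p_j = 1, and set q = λ₂/λ₁ ∈ (0,1). Define P₀(s) = (∑_{j=1}^K p_j λ_j^s e^{-2λ_j}) / (∑_{j=1}^K p_j λ_j^s e^{-λ_j}). Then lim_{s→∞} q^{-s} · (P₀(s) − e^{-λ₁}) = (e^{λ₁−λ₂} − 1) · e^{-λ₂} · p₂/p₁. -/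
/-!
Write `a = λ₁`, `b = λ₂`, `D(s) = ∑ pⱼ λⱼ^s e^{-λⱼ}`. Clearing the denominator,
`P₀(s) - e^{-a} = (∑ pⱼ λⱼ^s e^{-λⱼ} (e^{-λⱼ} - e^{-a})) / D(s)`, and the `j = 1` term of the
numerator vanishes. Hence the numerator divided by `b^s` tends to its `j = 2` coefficient, while
`D(s) / a^s` tends to `p₁ e^{-a}`; the claim is the quotient of these two limits. Both are
instances of `tendsto_sum_dominant`.
-/

/-- A finite exponential sum, normalised by the power of the base `l i`, tends to the coefficient
at `i`, provided every other term with nonzero coefficient has a strictly smaller base. -/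
theorem tendsto_sum_dominant {K : ℕ} (l c : Fin K → ℝ) (hlpos : ∀ j, 0 < l j) (i : Fin K)
    (h : ∀ j, j ≠ i → c j = 0 ∨ l j < l i) :
    Filter.Tendsto (fun s : ℕ => ∑ j, c j * (l j / l i) ^ s) Filter.atTop (nhds (c i)) := by
  have key : Filter.Tendsto (fun s : ℕ => ∑ j, c j * (l j / l i) ^ s) Filter.atTop
      (nhds (∑ j, if j = i then c j else 0)) := by
    refine tendsto_finsetSum _ fun j _ => ?_
    by_cases hj : j = i
    · subst hj
      simp [div_self (hlpos j).ne']
    · rw [if_neg hj]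
      rcases h j hj with h0 | h0
      · simp [h0]
      · have := (tendsto_pow_atTop_nhds_zero_of_lt_one
          (div_pos (hlpos j) (hlpos i)).le ((div_lt_one (hlpos i)).2 h0)).const_mul (c j)
        simpa using this
  simpa using key

/-- With `q = λ₂/λ₁`, `lim_{s→∞} q^{-s}·(P₀(s) − e^{-λ₁}) = (e^{λ₁−λ₂} − 1)·e^{-λ₂}·p₂/p₁`. -/
theorem stmt5 (K : ℕ) (hK : 2 ≤ K) (l p : Fin K → ℝ)
    (hl : StrictAnti l) (hlpos : ∀ i, 0 < l i) (hp : ∀ i, 0 < p i)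
    (hsum : ∑ i, p i = 1) :
    Filter.Tendsto
      (fun s : ℕ =>
        ((∑ j, p j * l j ^ s * Real.exp (-(2 * l j))) /
            (∑ j, p j * l j ^ s * Real.exp (-(l j))) -
          Real.exp (-(l ⟨0, by omega⟩))) /
        (l ⟨1, by omega⟩ / l ⟨0, by omega⟩) ^ s)
      Filter.atTop
      (nhds ((Real.exp (l ⟨0, by omega⟩ - l ⟨1, by omega⟩) - 1) *
        Real.exp (-(l ⟨1, by omega⟩)) * p ⟨1, by omega⟩ / p ⟨0, by omega⟩)) := by
  
  set i0 : Fin K := ⟨0, by omega⟩ with hi0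
  set i1 : Fin K := ⟨1, by omega⟩ with hi1
  have hN := tendsto_sum_dominant l
    (fun j => p j * Real.exp (-(l j)) * (Real.exp (-(l j)) - Real.exp (-(l i0)))) hlpos i1
    (by
      intro j hj
      by_cases h0 : j = i0
      · left
        simp [h0]
      · right
        apply hl
        have h0' : j.val ≠ 0 := fun h => h0 (Fin.ext h)
        have h1' : j.val ≠ 1 := fun h => hj (Fin.ext h)
        rw [Fin.lt_def]
        change 1 < j.val
        omega)
  have hD := tendsto_sum_dominant l (fun j => p j * Real.exp (-(l j))) hlpos i0
    (by
      intro j hj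
      right
      apply hl
      have h0' : j.val ≠ 0 := fun h => hj (Fin.ext h)
      rw [Fin.lt_def]
      change 0 < j.val
      omega)
  have hne : p i0 * Real.exp (-(l i0)) ≠ 0 := (mul_pos (hp i0) (Real.exp_pos _)).ne'
  have hlim := hN.div hD hne
  convert hlim using 1
  · funext s
    have hDpos : 0 < ∑ j, p j * l j ^ s * Real.exp (-(l j)) :=
      Finset.sum_pos (fun j _ => mul_pos (mul_pos (hp j) (pow_pos (hlpos j) s)) (Real.exp_pos _))
        ⟨i0, Finset.mem_univ _⟩
    have eD : ∑ j, p j * Real.exp (-(l j)) * (l j / l i0) ^ s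
        = (∑ j, p j * l j ^ s * Real.exp (-(l j))) / l i0 ^ s := by
      rw [Finset.sum_div]
      refine Finset.sum_congr rfl fun j _ => ?_
      rw [div_pow]
      ring
    have eN : ∑ j, p j * Real.exp (-(l j)) * (Real.exp (-(l j)) - Real.exp (-(l i0)))
          * (l j / l i1) ^ s
        = ((∑ j, p j * l j ^ s * Real.exp (-(2 * l j))) -
          Real.exp (-(l i0)) * ∑ j, p j * l j ^ s * Real.exp (-(l j))) / l i1 ^ s := by
      rw [Finset.mul_sum, ← Finset.sum_sub_distrib, Finset.sum_div]
      refine Finset.sum_congr rfl fun j _ => ?_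
      have : Real.exp (-(2 * l j)) = Real.exp (-(l j)) * Real.exp (-(l j)) := by
        rw [← Real.exp_add]
        congr 1
        ring
      rw [div_pow, this]
      ring
    simp only [Pi.div_apply]
    rw [eD, eN, div_pow]
    have h0 := (pow_pos (hlpos i0) s).ne'
    have h1 := (pow_pos (hlpos i1) s).ne'
    have hD' := hDpos.ne'
    field_simp
  · have e : Real.exp (l i0 - l i1) * Real.exp (-(l i0)) = Real.exp (-(l i1)) := by
      rw [← Real.exp_add]
      congr 1
      ring
    have hp0 := (hp i0).ne'
    congr 1
    rw [div_eq_div_iff hp0 hne]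
    linear_combination (Real.exp (-(l i1)) * p i1 * p i0) * e
end

section
/- Let K ≥ 2, let λ₁ > λ₂ > … > λ_K > 0 be real numbers, let p₁, …, p_K > 0 with ∑_j p_j = 1, and set q = λ₂/λ₁ ∈ (0,1). Define the posterior mean m(s) = (∑_{j=1}^K p_j λ_j^{s+1} e^{-λ_j}) / (∑_{j=1}^K p_j λ_j^s e^{-λ_j}). Then lim_{s→∞} q^{-s} · (λ₁ − m(s)) = e^{λ₁−λ₂} · (λ₁ − λ₂) · p₂/p₁. -/
/-!
Write `wⱼ = pⱼ e^{-λⱼ}`. Since `λ₁ - m(s) = ∑ⱼ wⱼ (λ₁ - λⱼ) λⱼ^s / ∑ⱼ wⱼ λⱼ^s`, dividing by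
`(λ₂/λ₁)^s` gives the quotient of `∑ⱼ wⱼ (λ₁ - λⱼ) (λⱼ/λ₂)^s` by `∑ⱼ wⱼ (λⱼ/λ₁)^s`. The term
`j = 1` of the numerator vanishes, so in each sum a single term is constant in `s` and all others
are zero or decay geometrically (`tendsto_sum_mul_div_pow`); the limit is
`w₂ (λ₁ - λ₂) / w₁`.
-/

open Filter Topology

/-- A finite exponential sum, normalised by its dominant base `l i`, tends to the coefficient of
that base. Bases exceeding `l i` are allowed if their coefficient vanishes. -/
lemma tendsto_sum_mul_div_pow {ι : Type*} [Fintype ι] [DecidableEq ι] (c l : ι → ℝ) (i : ι)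
    (hpos : ∀ j, 0 < l j) (h : ∀ j, j ≠ i → c j = 0 ∨ l j < l i) :
    Tendsto (fun s : ℕ => ∑ j, c j * (l j / l i) ^ s) atTop (𝓝 (c i)) := by
  have key : ∀ j ∈ Finset.univ, Tendsto (fun s : ℕ => c j * (l j / l i) ^ s) atTop
      (𝓝 (if j = i then c i else 0)) := by
    intro j _
    by_cases hj : j = i
    · subst hj
      simp [div_self (hpos j).ne']
    · rw [if_neg hj]
      rcases h j hj with h0 | hlt
      · simp [h0]
      · have := (tendsto_pow_atTop_nhds_zero_of_lt_one (div_pos (hpos j) (hpos i)).le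
          ((div_lt_one (hpos i)).2 hlt)).const_mul (c j)
        simpa using this
  simpa using tendsto_finsetSum _ key

/-- With `q = λ₂/λ₁` and posterior mean
`m(s) = (∑ⱼ pⱼ λⱼ^{s+1} e^{-λⱼ}) / (∑ⱼ pⱼ λⱼ^s e^{-λⱼ})`,
`lim_{s→∞} q^{-s}·(λ₁ − m(s)) = e^{λ₁−λ₂}·(λ₁ − λ₂)·p₂/p₁`. -/
theorem stmt6 (K : ℕ) (hK : 2 ≤ K) (l p : Fin K → ℝ)
    (hl : StrictAnti l) (hlpos : ∀ i, 0 < l i) (hp : ∀ i, 0 < p i)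
    (hsum : ∑ i, p i = 1) :
    Filter.Tendsto
      (fun s : ℕ =>
        (l ⟨0, by omega⟩ -
          (∑ j, p j * l j ^ (s + 1) * Real.exp (-(l j))) /
            (∑ j, p j * l j ^ s * Real.exp (-(l j)))) /
        (l ⟨1, by omega⟩ / l ⟨0, by omega⟩) ^ s)
      Filter.atTop
      (nhds (Real.exp (l ⟨0, by omega⟩ - l ⟨1, by omega⟩) *
        (l ⟨0, by omega⟩ - l ⟨1, by omega⟩) * p ⟨1, by omega⟩ / p ⟨0, by omega⟩)) := by
  have hi : ∃ i : Fin K, i = ⟨0, by omega⟩ := ⟨_, rfl⟩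
  have hk : ∃ k : Fin K, k = ⟨1, by omega⟩ := ⟨_, rfl⟩
  obtain ⟨i, hi⟩ := hi
  obtain ⟨k, hk⟩ := hk
  rw [← hi, ← hk]
  have hlti : ∀ j, j ≠ i → l j < l i := fun j hj => hl (by
    subst hi; rw [Fin.lt_def]; have := Fin.val_ne_of_ne hj; simp at this ⊢; omega)
  have hltk : ∀ j, j ≠ i → j ≠ k → l j < l k := fun j hj hjk => hl (by
    subst hi hk; rw [Fin.lt_def]; have := Fin.val_ne_of_ne hj
    have := Fin.val_ne_of_ne hjk; simp at *; omega)
  have hA := tendsto_sum_mul_div_pow (fun j => p j * Real.exp (-(l j)) * (l i - l j)) l k hlpos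
    (fun j hj => by
      by_cases hji : j = i
      · left; simp [hji]
      · exact Or.inr (hltk j hji hj))
  have hD := tendsto_sum_mul_div_pow (fun j => p j * Real.exp (-(l j))) l i hlpos
    (fun j hj => Or.inr (hlti j hj))
  have hlim := hA.div hD (mul_pos (hp i) (Real.exp_pos _)).ne'
  have hval : Real.exp (l i - l k) * (l i - l k) * p k / p i =
      p k * Real.exp (-(l k)) * (l i - l k) / (p i * Real.exp (-(l i))) := by
    have : Real.exp (l i - l k) = Real.exp (-(l k)) / Real.exp (-(l i)) := by
      rw [← Real.exp_sub]; congr 1; ring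
    rw [this]
    have := (hp i).ne'
    field_simp
  rw [hval]
  refine hlim.congr fun s => ?_
  have hDpos : 0 < ∑ j, p j * l j ^ s * Real.exp (-(l j)) :=
    Finset.sum_pos (fun j _ => mul_pos (mul_pos (hp j) (pow_pos (hlpos j) s)) (Real.exp_pos _))
      ⟨i, Finset.mem_univ i⟩
  have hA' : ∑ j, p j * Real.exp (-(l j)) * (l i - l j) * (l j / l k) ^ s =
      (l i * (∑ j, p j * l j ^ s * Real.exp (-(l j))) -
        ∑ j, p j * l j ^ (s + 1) * Real.exp (-(l j))) / l k ^ s := by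
    rw [Finset.mul_sum, ← Finset.sum_sub_distrib, Finset.sum_div]
    refine Finset.sum_congr rfl fun j _ => ?_
    rw [div_pow]; ring
  have hD' : ∑ j, p j * Real.exp (-(l j)) * (l j / l i) ^ s =
      (∑ j, p j * l j ^ s * Real.exp (-(l j))) / l i ^ s := by
    rw [Finset.sum_div]
    refine Finset.sum_congr rfl fun j _ => ?_
    rw [div_pow]; ring
  simp only [Pi.div_apply]
  rw [hA', hD', div_pow]
  have h1 := (pow_pos (hlpos i) s).ne'
  have h2 := (pow_pos (hlpos k) s).ne'
  have h3 := hDpos.ne'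
  field_simp
end

section
/- Let K ≥ 2, let λ₁ > λ₂ > … > λ_K > 0 be real numbers, let p₁, …, p_K > 0 with ∑_j p_j = 1, and set q = λ₂/λ₁ ∈ (0,1). Define the posterior mean m(s) = (∑_{j=1}^K p_j λ_j^{s+1} e^{-λ_j}) / (∑_{j=1}^K p_j λ_j^s e^{-λ_j}). Then lim_{s→∞} q^{-s} · (e^{-m(s)} − e^{-λ₁}) = (λ₁ − λ₂) · e^{-λ₂} · p₂/p₁. -/
/-!
Write `a = λ₁`, `b = λ₂`, `wⱼ = pⱼ e^{-λⱼ}`. The gap between the largest rate and the posterior mean is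
`a - m(s) = (∑ⱼ wⱼ (a - λⱼ) λⱼ^s) / (∑ⱼ wⱼ λⱼ^s)`. The first term of the numerator vanishes, so the
numerator is asymptotic to `w₂ (a - b) b^s`, while the denominator is asymptotic to `w₁ a^s`; both facts
are instances of `tendsto_dominant_sum`. Hence `(a - m(s)) / q^s → w₂ (a - b) / w₁`, and in particular
`a - m(s) → 0`. Since `e^{-m} - e^{-a} = e^{-a} (e^{a - m} - 1)` and `(e^x - 1) / x → 1` as `x → 0`,
the limit is multiplied by `e^{-a}`.
-/

/-- In a finite exponential sum, after division by `b ^ s`, only the term with base `b` survives,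
provided every other term has a smaller base or a zero coefficient. -/
lemma tendsto_dominant_sum {K : ℕ} (c l : Fin K → ℝ) (hlpos : ∀ j, 0 < l j) (i : Fin K)
    (h : ∀ j, j ≠ i → c j = 0 ∨ l j < l i) :
    Filter.Tendsto (fun s : ℕ => (∑ j, c j * l j ^ s) / l i ^ s) Filter.atTop (nhds (c i)) := by
  have hterm : ∀ j ∈ Finset.univ, Filter.Tendsto (fun s : ℕ => c j * (l j / l i) ^ s)
      Filter.atTop (nhds (if j = i then c j else 0)) := by
    intro j _
    by_cases hj : j = i
    · subst hj
      simp [div_self (hlpos j).ne']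
    · rcases h j hj with h0 | hlt
      · simp [h0]
      · have := (tendsto_pow_atTop_nhds_zero_of_lt_one
          (div_pos (hlpos j) (hlpos i)).le ((div_lt_one (hlpos i)).2 hlt)).const_mul (c j)
        simpa [hj] using this
  have hs := tendsto_finsetSum _ hterm
  simp only [Finset.sum_ite_eq', Finset.mem_univ, if_true] at hs
  refine hs.congr fun s => ?_
  rw [Finset.sum_div]
  exact Finset.sum_congr rfl fun j _ => by rw [div_pow, mul_div_assoc]


/-- With `q = λ₂/λ₁` and posterior mean
`m(s) = (∑ⱼ pⱼ λⱼ^{s+1} e^{-λⱼ}) / (∑ⱼ pⱼ λⱼ^s e^{-λⱼ})`,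
`lim_{s→∞} q^{-s}·(e^{-m(s)} − e^{-λ₁}) = (λ₁ − λ₂)·e^{-λ₂}·p₂/p₁`. -/
theorem stmt7 (K : ℕ) (hK : 2 ≤ K) (l p : Fin K → ℝ)
    (hl : StrictAnti l) (hlpos : ∀ i, 0 < l i) (hp : ∀ i, 0 < p i)
    (hsum : ∑ i, p i = 1) :
    Filter.Tendsto
      (fun s : ℕ =>
        (Real.exp (-((∑ j, p j * l j ^ (s + 1) * Real.exp (-(l j))) /
            (∑ j, p j * l j ^ s * Real.exp (-(l j))))) -
          Real.exp (-(l ⟨0, by omega⟩))) /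
        (l ⟨1, by omega⟩ / l ⟨0, by omega⟩) ^ s)
      Filter.atTop
      (nhds ((l ⟨0, by omega⟩ - l ⟨1, by omega⟩) *
        Real.exp (-(l ⟨1, by omega⟩)) * p ⟨1, by omega⟩ / p ⟨0, by omega⟩)) := by
  set i₀ : Fin K := ⟨0, by omega⟩ with hi₀
  set i₁ : Fin K := ⟨1, by omega⟩ with hi₁
  have h01 : l i₁ < l i₀ := hl (by simp [hi₀, hi₁, Fin.lt_def])
  have ha := hlpos i₀
  have hb := hlpos i₁
  have hlt0 : ∀ j, j ≠ i₀ → l j < l i₀ := fun j hj => hl (by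
    rw [Fin.lt_def]
    have : j.val ≠ 0 := fun h => hj (Fin.ext h)
    simp only [hi₀]
    omega)
  have hlt1 : ∀ j, j ≠ i₀ → j ≠ i₁ → l j < l i₁ := fun j hj hj' => hl (by
    rw [Fin.lt_def]
    have : j.val ≠ 0 := fun h => hj (Fin.ext h)
    have : j.val ≠ 1 := fun h => hj' (Fin.ext h)
    simp only [hi₁]
    omega)
  have hD := tendsto_dominant_sum (fun j => p j * Real.exp (-(l j))) l hlpos i₀
    (fun j hj => Or.inr (hlt0 j hj))
  have hN := tendsto_dominant_sum (fun j => p j * Real.exp (-(l j)) * (l i₀ - l j)) l hlpos i₁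
    (fun j hj => by
      by_cases hj0 : j = i₀
      · left
        simp [hj0]
      · exact Or.inr (hlt1 j hj0 hj))
  have hw : p i₀ * Real.exp (-(l i₀)) ≠ 0 := (mul_pos (hp i₀) (Real.exp_pos _)).ne'
  set m : ℕ → ℝ := fun s => (∑ j, p j * l j ^ (s + 1) * Real.exp (-(l j))) /
    (∑ j, p j * l j ^ s * Real.exp (-(l j))) with hm
  have hgap : ∀ s, l i₀ - m s = (∑ j, p j * Real.exp (-(l j)) * (l i₀ - l j) * l j ^ s) /
      (∑ j, p j * Real.exp (-(l j)) * l j ^ s) := by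
    intro s
    have hDpos : 0 < ∑ j, p j * Real.exp (-(l j)) * l j ^ s :=
      Finset.sum_pos (fun j _ => mul_pos (mul_pos (hp j) (Real.exp_pos _)) (pow_pos (hlpos j) s))
        ⟨i₀, Finset.mem_univ _⟩
    have hDeq : ∑ j, p j * l j ^ s * Real.exp (-(l j)) = ∑ j, p j * Real.exp (-(l j)) * l j ^ s :=
      Finset.sum_congr rfl fun j _ => by ring
    simp only [hm]
    rw [hDeq, eq_div_iff hDpos.ne', sub_mul, div_mul_cancel₀ _ hDpos.ne', Finset.mul_sum,
      ← Finset.sum_sub_distrib]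
    exact Finset.sum_congr rfl fun j _ => by ring
  have hquot : Filter.Tendsto (fun s => (l i₀ - m s) / (l i₁ / l i₀) ^ s) Filter.atTop
      (nhds (p i₁ * Real.exp (-(l i₁)) * (l i₀ - l i₁) / (p i₀ * Real.exp (-(l i₀))))) := by
    refine (hN.div hD hw).congr fun s => ?_
    rw [Pi.div_apply, hgap, div_pow, div_div_div_eq, div_div_div_eq]
    ring
  have hq := tendsto_pow_atTop_nhds_zero_of_lt_one (div_pos hb ha).le ((div_lt_one ha).2 h01)
  have hzero : Filter.Tendsto (fun s => l i₀ - m s) Filter.atTop (nhds 0) := by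
    have := hquot.mul hq
    rw [mul_zero] at this
    exact this.congr fun s => div_mul_cancel₀ _ (pow_pos (div_pos hb ha) s).ne'
  -- `dslope Real.exp 0` is the continuous extension of `(e ^ x - 1) / x`, with value `1` at `0`.
  have hslope : Filter.Tendsto (fun s => dslope Real.exp 0 (l i₀ - m s)) Filter.atTop (nhds 1) := by
    have hc : ContinuousAt (dslope Real.exp 0) 0 :=
      continuousAt_dslope_same.2 Real.differentiableAt_exp
    have h1 : dslope Real.exp 0 0 = 1 := by simp [dslope_same]
    have := hc.tendsto.comp hzero
    rwa [h1] at this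
  have hfinal := (hquot.mul hslope).const_mul (Real.exp (-(l i₀)))
  have hlim : Real.exp (-(l i₀)) *
      (p i₁ * Real.exp (-(l i₁)) * (l i₀ - l i₁) / (p i₀ * Real.exp (-(l i₀))) * 1) =
      (l i₀ - l i₁) * Real.exp (-(l i₁)) * p i₁ / p i₀ := by
    have := (hp i₀).ne'
    have := Real.exp_ne_zero (-(l i₀))
    field_simp
  rw [hlim] at hfinal
  refine hfinal.congr fun s => ?_
  have hsl := sub_smul_dslope Real.exp 0 (l i₀ - m s)
  rw [smul_eq_mul, sub_zero, Real.exp_zero] at hsl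
  have hexp : Real.exp (-(m s)) = Real.exp (-(l i₀)) * Real.exp (l i₀ - m s) := by
    rw [← Real.exp_add]
    congr 1
    ring
  change _ = (Real.exp (-(m s)) - Real.exp (-(l i₀))) / (l i₁ / l i₀) ^ s
  rw [hexp, div_mul_eq_mul_div, hsl]
  ring
end

section
/- Let λ₁ > 0, let g be a probability measure on the interval [0, λ₁], and let X be the Poisson mixture with mixing measure g, i.e., P[X = s] = ∫ λ^s e^{-λ}/s! dg(λ) for natural numbers s. If S is a natural number with S + 1 > λ₁, then P[X > S] ≤ (λ₁/(S + 1 − λ₁)) · P[X = S]. -/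
/-!
On the support of `g` one has `0 ≤ x ≤ l1`, so the Poisson weights satisfy
`x ^ (n + 1) e⁻ˣ / (n + 1)! ≤ (l1 / (n + 1)) · x ^ n e⁻ˣ / n!`. Integrating, the masses of the
mixture decay at least geometrically from `S` on, with ratio `r = l1 / (S + 1) < 1`
(`poissonMix_succ_le`). Hence the tail beyond `S` is at most
`∑ k, r ^ (k + 1) · P[X = S] = r / (1 - r) · P[X = S]`, and `r / (1 - r) = l1 / (S + 1 - l1)`.
-/

open MeasureTheory

/-- The mass `P[X = n]` of the Poisson mixture with mixing measure `g`. -/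
noncomputable def poissonMix (g : Measure ℝ) (n : ℕ) : ℝ :=
  ∫ x, x ^ n * Real.exp (-x) / (Nat.factorial n) ∂g

lemma ae_mem_Icc_of_compl_null {l1 : ℝ} {g : Measure ℝ} (hg : g (Set.Icc 0 l1)ᶜ = 0) :
    ∀ᵐ x ∂g, x ∈ Set.Icc 0 l1 := by
  rw [ae_iff]
  exact hg

lemma integrable_poissonWeight {l1 : ℝ} {g : Measure ℝ} [IsProbabilityMeasure g]
    (hg : g (Set.Icc 0 l1)ᶜ = 0) (n : ℕ) :
    Integrable (fun x : ℝ => x ^ n * Real.exp (-x) / (Nat.factorial n)) g := by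
  have hc : Continuous (fun x : ℝ => x ^ n * Real.exp (-x) / (Nat.factorial n)) := by fun_prop
  obtain ⟨C, hC⟩ := (isCompact_Icc (a := (0 : ℝ)) (b := l1)).exists_bound_of_continuousOn
    hc.continuousOn
  refine Integrable.of_bound hc.aestronglyMeasurable C ?_
  filter_upwards [ae_mem_Icc_of_compl_null hg] with x hx using hC x hx

lemma poissonMix_nonneg {l1 : ℝ} {g : Measure ℝ} (hg : g (Set.Icc 0 l1)ᶜ = 0) (n : ℕ) :
    0 ≤ poissonMix g n := by
  refine integral_nonneg_of_ae ?_
  filter_upwards [ae_mem_Icc_of_compl_null hg] with x hx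
  have := hx.1
  simp only [Pi.zero_apply]
  positivity

lemma poissonMix_succ_le {l1 : ℝ} {g : Measure ℝ} [IsProbabilityMeasure g] (hl1 : 0 < l1)
    (hg : g (Set.Icc 0 l1)ᶜ = 0) {S n : ℕ} (hn : S ≤ n) :
    poissonMix g (n + 1) ≤ l1 / ((S : ℝ) + 1) * poissonMix g n := by
  unfold poissonMix
  rw [← integral_const_mul]
  refine integral_mono_ae (integrable_poissonWeight hg _)
    ((integrable_poissonWeight hg _).const_mul _) ?_
  filter_upwards [ae_mem_Icc_of_compl_null hg] with x hx
  have hx0 := hx.1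
  have hnS : (S : ℝ) ≤ n := by exact_mod_cast hn
  have hr : x / ((n : ℝ) + 1) ≤ l1 / ((S : ℝ) + 1) := by
    have := hx.2
    gcongr
  calc x ^ (n + 1) * Real.exp (-x) / (Nat.factorial (n + 1))
      = x / ((n : ℝ) + 1) * (x ^ n * Real.exp (-x) / (Nat.factorial n)) := by
        rw [Nat.factorial_succ, pow_succ]
        push_cast
        field_simp
    _ ≤ l1 / ((S : ℝ) + 1) * (x ^ n * Real.exp (-x) / (Nat.factorial n)) := by
        gcongr

/-- For a Poisson mixture `X` whose mixing measure `g` is supported in `[0, λ₁]`,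
if `S + 1 > λ₁` then `P[X > S] ≤ (λ₁/(S + 1 − λ₁)) · P[X = S]`. -/
theorem stmt9 (l1 : ℝ) (hl1 : 0 < l1) (g : Measure ℝ) [IsProbabilityMeasure g]
    (hg : g (Set.Icc 0 l1)ᶜ = 0) (S : ℕ) (hS : l1 < (S : ℝ) + 1) :
    (∑' k : ℕ, ∫ x, x ^ (S + 1 + k) * Real.exp (-x) / (Nat.factorial (S + 1 + k)) ∂g) ≤
      (l1 / ((S : ℝ) + 1 - l1)) *
        ∫ x, x ^ S * Real.exp (-x) / (Nat.factorial S) ∂g := by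
  change (∑' k : ℕ, poissonMix g (S + 1 + k)) ≤ l1 / ((S : ℝ) + 1 - l1) * poissonMix g S
  set r : ℝ := l1 / ((S : ℝ) + 1) with hr
  have hS0 : (0 : ℝ) < (S : ℝ) + 1 := by positivity
  have hr0 : 0 ≤ r := by positivity
  have hr1 : r < 1 := (div_lt_one hS0).2 hS
  have hbound : ∀ k : ℕ, poissonMix g (S + 1 + k) ≤ r ^ k * (r * poissonMix g S) := by
    intro k
    induction k with
    | zero => simpa using poissonMix_succ_le hl1 hg (le_refl S)
    | succ k ih =>
      calc poissonMix g (S + 1 + k + 1) ≤ r * poissonMix g (S + 1 + k) :=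
            poissonMix_succ_le hl1 hg (by omega)
        _ ≤ r * (r ^ k * (r * poissonMix g S)) := by gcongr
        _ = r ^ (k + 1) * (r * poissonMix g S) := by ring
  have hgeom := (hasSum_geometric_of_lt_one hr0 hr1).mul_right (r * poissonMix g S)
  have hsum : Summable fun k : ℕ => poissonMix g (S + 1 + k) :=
    Summable.of_nonneg_of_le (fun k => poissonMix_nonneg hg _) hbound hgeom.summable
  refine (hsum.tsum_le_tsum hbound hgeom.summable).trans_eq ?_
  have hd : (S : ℝ) + 1 - l1 ≠ 0 := (sub_pos.2 hS).ne'
  have h1r : 1 - r = ((S : ℝ) + 1 - l1) / ((S : ℝ) + 1) := by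
    rw [hr]
    field_simp
  rw [hgeom.tsum_eq, h1r, hr]
  field_simp
end

section
/- Let g be a probability measure on [0,∞) and define f(s) = ∫ λ^s e^{-λ}/s! dg(λ) for natural numbers s, assuming f(s) > 0 and the integrals are finite for all s. Then for every natural number s, f(s+1)² ≤ ((s+2)/(s+1)) · f(s+2) · f(s); equivalently, the posterior mean (s+1)·f(s+1)/f(s) is nondecreasing in s. -/
open MeasureTheory

/-! With the moments `M s = ∫ x ^ s * exp (-x) ∂g`, one has `f s = M s / s!`, and the factor
`(s + 2) / (s + 1)` exactly absorbs the factorials, so the claim is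
`M (s + 1) ^ 2 ≤ M (s + 2) * M s`. This is Cauchy–Schwarz for the weight `x ^ s * exp (-x)`,
which is nonnegative `g`-almost everywhere; it follows from the nonnegativity of the integral of
`(M s * x - M (s + 1)) ^ 2` against that weight, since `M s > 0`. -/

/-- For the marginal pmf `f(s) = ∫ λ^s e^{-λ}/s! dg(λ)` of a Poisson mixture,
`f(s+1)² ≤ ((s+2)/(s+1))·f(s+2)·f(s)`, i.e. the posterior mean `(s+1)f(s+1)/f(s)`
is nondecreasing in `s`. -/
theorem stmt10 (g : Measure ℝ) [IsProbabilityMeasure g] (hg : g (Set.Iio 0) = 0)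
    (f : ℕ → ℝ)
    (hf : ∀ s : ℕ, f s = ∫ x, x ^ s * Real.exp (-x) / (Nat.factorial s) ∂g)
    (hpos : ∀ s : ℕ, 0 < f s)
    (hint : ∀ s : ℕ, Integrable (fun x => x ^ s * Real.exp (-x)) g) :
    ∀ s : ℕ, f (s + 1) ^ 2 ≤ (((s : ℝ) + 2) / ((s : ℝ) + 1)) * f (s + 2) * f s := by
  intro s
  set M : ℕ → ℝ := fun k => ∫ x, x ^ k * Real.exp (-x) ∂g with hM
  have hfM : ∀ k, f k = M k / (Nat.factorial k) := fun k => by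
    rw [hf k, integral_div]
  have hMpos : 0 < M s := by
    have h := hpos s
    rw [hfM s] at h
    exact (div_pos_iff_of_pos_right (by positivity)).1 h
  have hae : ∀ᵐ x ∂g, 0 ≤ x := by
    rw [ae_iff]
    simp only [not_le]
    exact hg
  have hnn : 0 ≤ ∫ x, (M s * x - M (s + 1)) ^ 2 * (x ^ s * Real.exp (-x)) ∂g := by
    apply integral_nonneg_of_ae
    filter_upwards [hae] with x hx
    simp only [Pi.zero_apply]
    positivity
  have heq : ∫ x, (M s * x - M (s + 1)) ^ 2 * (x ^ s * Real.exp (-x)) ∂g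
      = M s ^ 2 * M (s + 2) - 2 * M s * M (s + 1) * M (s + 1) + M (s + 1) ^ 2 * M s := by
    have h2 := (hint (s + 2)).const_mul (M s ^ 2)
    have h1 := (hint (s + 1)).const_mul (2 * M s * M (s + 1))
    have h0 := (hint s).const_mul (M (s + 1) ^ 2)
    calc _ = ∫ x, (M s ^ 2 * (x ^ (s + 2) * Real.exp (-x))
            - 2 * M s * M (s + 1) * (x ^ (s + 1) * Real.exp (-x)))
            + M (s + 1) ^ 2 * (x ^ s * Real.exp (-x)) ∂g := by
          congr 1
          funext x
          ring
      _ = _ := by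
          rw [integral_add (by exact h2.sub h1) h0, integral_sub h2 h1, integral_const_mul,
            integral_const_mul, integral_const_mul]
  have key : M (s + 1) ^ 2 ≤ M (s + 2) * M s := by
    rw [heq] at hnn
    have h : 0 ≤ M s * (M (s + 2) * M s - M (s + 1) ^ 2) := by linarith
    linarith [nonneg_of_mul_nonneg_right h hMpos]
  have hfac : (0 : ℝ) < (Nat.factorial s : ℝ) := by positivity
  have hrhs : (((s : ℝ) + 2) / ((s : ℝ) + 1)) * f (s + 2) * f s
      = M (s + 2) * M s / ((Nat.factorial (s + 1) : ℝ)) ^ 2 := by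
    rw [hfM, hfM, Nat.factorial_succ (s + 1), Nat.factorial_succ s]
    push_cast
    field_simp
    ring
  rw [hrhs, hfM (s + 1), div_pow]
  gcongr
end

section
/- Let g be a probability measure on [0,∞) with finite positive mean μ = ∫ λ dg(λ) > 0, and let X be the Poisson mixture with mixing measure g, i.e., P[X ≤ m] = ∫ (∑_{k=0}^m λ^k e^{-λ}/k!) dg(λ). Then for every real h > 1, P[X ≤ h²·μ] ≥ (1 − 1/h)². -/
open MeasureTheory

/-!
The bound follows from a single application of Markov's inequality to the mixture. A
Poisson variable of rate `x` satisfies `P[X ≤ m] ≥ 1 - x / (m + 1)` (`one_sub_div_le_poisson_cdf`);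
integrating against `g` and using `m + 1 > h² μ` for `m = ⌊h² μ⌋` gives `P[X ≤ h² μ] ≥ 1 - 1 / h²`,
which dominates `(1 - 1 / h)²` because `1 + 1 / h ≥ 1 - 1 / h`.
-/

/-- Markov's inequality for a Poisson variable of rate `x`, with both sides multiplied by `exp x`.
The tail of the exponential series from `m + 1` on is at most `x / (m + 1)` times the tail from `m`
on, by comparing consecutive terms. -/
lemma exp_mul_one_sub_le_sum (m : ℕ) {x : ℝ} (hx : 0 ≤ x) :
    Real.exp x * (1 - x / (m + 1)) ≤
      ∑ k ∈ Finset.range (m + 1), x ^ k / (Nat.factorial k : ℝ) := by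
  have hs : Summable (fun k : ℕ => x ^ k / (Nat.factorial k : ℝ)) :=
    Real.summable_pow_div_factorial x
  have hexp : Real.exp x = ∑' k : ℕ, x ^ k / (Nat.factorial k : ℝ) := by
    rw [Real.exp_eq_exp_ℝ, NormedSpace.exp_eq_tsum_div]
  have h1 := hs.sum_add_tsum_nat_add (m + 1)
  have h0 := hs.sum_add_tsum_nat_add m
  have hpos : 0 ≤ ∑ k ∈ Finset.range m, x ^ k / (Nat.factorial k : ℝ) :=
    Finset.sum_nonneg fun k _ => by positivity
  have htail : ∑' k : ℕ, x ^ (k + (m + 1)) / (Nat.factorial (k + (m + 1)) : ℝ) ≤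
      ∑' k : ℕ, x / (m + 1) * (x ^ (k + m) / (Nat.factorial (k + m) : ℝ)) := by
    refine Summable.tsum_le_tsum (fun k => ?_) ((summable_nat_add_iff (m + 1)).2 hs)
      (((summable_nat_add_iff m).2 hs).mul_left _)
    rw [← add_assoc, Nat.factorial_succ, pow_succ, div_mul_div_comm, mul_comm x]
    push_cast
    gcongr
    linarith [(Nat.cast_nonneg k : (0 : ℝ) ≤ k)]
  rw [tsum_mul_left] at htail
  rw [← hexp] at h0 h1
  have hc : 0 ≤ x / ((m : ℝ) + 1) := by positivity
  have hle := mul_le_mul_of_nonneg_left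
    (show ∑' k : ℕ, x ^ (k + m) / (Nat.factorial (k + m) : ℝ) ≤ Real.exp x by linarith) hc
  linarith

lemma poisson_cdf_eq (m : ℕ) (x : ℝ) :
    ∑ k ∈ Finset.range (m + 1), x ^ k * Real.exp (-x) / (Nat.factorial k : ℝ) =
      Real.exp (-x) * ∑ k ∈ Finset.range (m + 1), x ^ k / (Nat.factorial k : ℝ) := by
  rw [Finset.mul_sum]
  exact Finset.sum_congr rfl fun k _ => by ring

lemma one_sub_div_le_poisson_cdf (m : ℕ) {x : ℝ} (hx : 0 ≤ x) :
    1 - x / (m + 1) ≤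
      ∑ k ∈ Finset.range (m + 1), x ^ k * Real.exp (-x) / (Nat.factorial k : ℝ) := by
  rw [poisson_cdf_eq]
  have h := mul_le_mul_of_nonneg_left (exp_mul_one_sub_le_sum m hx) (Real.exp_pos (-x)).le
  rwa [← mul_assoc, ← Real.exp_add, neg_add_cancel, Real.exp_zero, one_mul] at h

lemma poisson_cdf_le_one (m : ℕ) {x : ℝ} (hx : 0 ≤ x) :
    ∑ k ∈ Finset.range (m + 1), x ^ k * Real.exp (-x) / (Nat.factorial k : ℝ) ≤ 1 := by
  rw [poisson_cdf_eq]
  have h := mul_le_mul_of_nonneg_left (Real.sum_le_exp_of_nonneg hx (m + 1)) (Real.exp_pos (-x)).le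
  rwa [← Real.exp_add, neg_add_cancel, Real.exp_zero] at h

/-- For a Poisson mixture `X` with mixing measure `g` on `[0,∞)` of finite positive mean `μ`,
for every real `h > 1`, `P[X ≤ h²·μ] ≥ (1 − 1/h)²`. -/
theorem stmt12 (g : Measure ℝ) [IsProbabilityMeasure g] (hg : g (Set.Iio 0) = 0)
    (hint : Integrable (fun x : ℝ => x) g) (hmean : 0 < ∫ x, x ∂g) :
    ∀ h : ℝ, 1 < h →
      (1 - 1 / h) ^ 2 ≤
        ∫ x, (∑ k ∈ Finset.range (Nat.floor (h ^ 2 * ∫ x, x ∂g) + 1),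
          x ^ k * Real.exp (-x) / (Nat.factorial k)) ∂g := by
  intro h hh
  set μ := ∫ x, x ∂g with hμ
  have hm := Nat.lt_floor_add_one (h ^ 2 * μ)
  set m := Nat.floor (h ^ 2 * μ)
  have hae : ∀ᵐ x ∂g, 0 ≤ x := by
    rw [ae_iff]
    simp only [not_le]
    exact hg
  have hF : Integrable (fun x : ℝ => ∑ k ∈ Finset.range (m + 1),
      x ^ k * Real.exp (-x) / (Nat.factorial k : ℝ)) g := by
    refine (integrable_const (1 : ℝ)).mono' ?_ ?_
    · exact Continuous.aestronglyMeasurable (by fun_prop)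
    · filter_upwards [hae] with x hx
      rw [Real.norm_of_nonneg (Finset.sum_nonneg fun k _ => by positivity)]
      exact poisson_cdf_le_one m hx
  have hL : Integrable (fun x : ℝ => 1 - x / ((m : ℝ) + 1)) g :=
    (integrable_const 1).sub (hint.div_const _)
  have hmono := integral_mono_ae hL hF (hae.mono fun x hx => one_sub_div_le_poisson_cdf m hx)
  rw [integral_sub (integrable_const 1) (hint.div_const _), integral_div, ← hμ] at hmono
  simp only [integral_const, probReal_univ, smul_eq_mul, mul_one] at hmono
  have hmarkov : μ / ((m : ℝ) + 1) ≤ (1 / h) ^ 2 := by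
    rw [one_div, inv_pow, div_le_iff₀ (by positivity), inv_mul_eq_div, le_div_iff₀ (by positivity)]
    linarith
  have h1 : 1 / h < 1 := by rw [div_lt_one (by linarith)]; exact hh
  have h0 : 0 < 1 / h := by positivity
  nlinarith
end

section
/- Let S be a finite nonempty index set, let y_s > 0 for s ∈ S, and set n = ∑_{s ∈ S} y_s. Let M_s > 0 for s ∈ S, and suppose u, v : S → ℝ satisfy 0 < u(s) ≤ M_s and 0 < v(s) ≤ M_s for all s ∈ S, and ∑_{s ∈ S} (y_s/n)·log v(s) ≥ ∑_{s ∈ S} (y_s/n)·log u(s). Then for every s ∈ S, v(s) ≥ u(s) · ∏_{s' ∈ S, s' ≠ s} (u(s')/M_{s'})^{y_{s'}/y_s}. -/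
/-!
Clearing `n` and isolating the term `s` in the likelihood comparison gives
`y_s log u(s) + ∑_{t ≠ s} y_t log u(t) ≤ y_s log v(s) + ∑_{t ≠ s} y_t log v(t)`.
Bounding `log v(t) ≤ log M_t` for `t ≠ s`, dividing by `y_s` and exponentiating yields the claim.
-/

/-- Core inequality for the CG iterate lower bound: if `0 < u(s), v(s) ≤ M_s` on a finite set
`S` with weights `y_s > 0`, `n = ∑ y_s`, and the weighted log-likelihood of `v` is at least
that of `u`, then `v(s) ≥ u(s) · ∏_{s' ≠ s} (u(s')/M_{s'})^{y_{s'}/y_s}` for every `s ∈ S`. -/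
theorem stmt13 {α : Type*} [DecidableEq α] (S : Finset α) (hS : S.Nonempty)
    (y M u v : α → ℝ)
    (hy : ∀ s ∈ S, 0 < y s) (hM : ∀ s ∈ S, 0 < M s)
    (hu : ∀ s ∈ S, 0 < u s ∧ u s ≤ M s) (hv : ∀ s ∈ S, 0 < v s ∧ v s ≤ M s)
    (hobj : ∑ s ∈ S, (y s / ∑ s' ∈ S, y s') * Real.log (u s) ≤
            ∑ s ∈ S, (y s / ∑ s' ∈ S, y s') * Real.log (v s)) :
    ∀ s ∈ S, u s * ∏ s' ∈ S.erase s, (u s' / M s') ^ (y s' / y s) ≤ v s := by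
  intro s hs
  have hn : 0 < ∑ s' ∈ S, y s' := Finset.sum_pos hy hS
  have hys := hy s hs
  have hsum : ∑ t ∈ S, y t * Real.log (u t) ≤ ∑ t ∈ S, y t * Real.log (v t) := by
    simp only [div_mul_eq_mul_div, ← Finset.sum_div] at hobj
    exact (div_le_div_iff_of_pos_right hn).1 hobj
  rw [← Finset.add_sum_erase S _ hs, ← Finset.add_sum_erase S _ hs] at hsum
  have hvM : ∑ t ∈ S.erase s, y t * Real.log (v t) ≤
      ∑ t ∈ S.erase s, y t * Real.log (M t) := by
    refine Finset.sum_le_sum fun t ht => ?_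
    have ht := Finset.mem_of_mem_erase ht
    exact mul_le_mul_of_nonneg_left (Real.log_le_log (hv t ht).1 (hv t ht).2) (hy t ht).le
  have hpos : ∀ t ∈ S.erase s, 0 < (u t / M t) ^ (y t / y s) := fun t ht =>
    have ht := Finset.mem_of_mem_erase ht
    Real.rpow_pos_of_pos (div_pos (hu t ht).1 (hM t ht)) _
  have hprod := Finset.prod_pos hpos
  have hlog : y s * Real.log (∏ t ∈ S.erase s, (u t / M t) ^ (y t / y s)) =
      ∑ t ∈ S.erase s, y t * Real.log (u t) - ∑ t ∈ S.erase s, y t * Real.log (M t) := by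
    rw [Real.log_prod fun t ht => (hpos t ht).ne', Finset.mul_sum, ← Finset.sum_sub_distrib]
    refine Finset.sum_congr rfl fun t ht => ?_
    have ht := Finset.mem_of_mem_erase ht
    rw [Real.log_rpow (div_pos (hu t ht).1 (hM t ht)),
      Real.log_div (hu t ht).1.ne' (hM t ht).ne']
    field_simp
  rw [← Real.log_le_log_iff (mul_pos (hu s hs).1 hprod) (hv s hs).1,
    Real.log_mul (hu s hs).1.ne' hprod.ne']
  refine le_of_mul_le_mul_left ?_ hys
  rw [mul_add, hlog]
  linarith
end

section
/- Let g be a probability measure on [0,∞) such that g((M,∞)) > 0 for every real M > 0 (i.e., the prior on the Poisson rate is unbounded). Then for every M > 0, lim_{k→∞} (∫_{(M,∞)} λ^k e^{-λ} dg(λ)) / (∫_{[0,∞)} λ^k e^{-λ} dg(λ)) = 1; that is, the posterior probability P[λ > M | X = k] tends to 1 as the observed count k tends to infinity. -/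
/-!
Split the normalising integral `I k = ∫ x ^ k * exp (-x) ∂g` at `M`. The part over `Iic M` is at most
`M ^ k`, whereas the part over `Ioi (2 * M)` is at least `(2 * M) ^ k * c` with
`c = ∫ x in Ioi (2 * M), exp (-x) ∂g`, which is positive because `g` is unbounded. Hence the
posterior probability of `Iic M` is at most `(1 / 2) ^ k / c`, which tends to `0`.
-/

open MeasureTheory

/-- On the half-line `x ^ k * exp (-x) ≤ k !`, so the Poisson weight is bounded `g`-a.e. -/
lemma integrable_poisson_weight (g : Measure ℝ) [IsProbabilityMeasure g]
    (h0 : ∀ᵐ x ∂g, 0 ≤ x) (k : ℕ) :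
    Integrable (fun x : ℝ => x ^ k * Real.exp (-x)) g := by
  refine Integrable.of_bound (by fun_prop) (k.factorial : ℝ) ?_
  filter_upwards [h0] with x hx
  have h := Real.pow_div_factorial_le_exp x hx k
  rw [div_le_iff₀ (by positivity)] at h
  rw [Real.norm_of_nonneg (by positivity), Real.exp_neg, ← div_eq_mul_inv,
    div_le_iff₀ (Real.exp_pos x)]
  linarith

/-- If the prior `g` on the Poisson rate is unbounded (puts positive mass beyond every `M > 0`),
then for every `M > 0` the posterior probability `P[λ > M | X = k]` tends to `1` as `k → ∞`. -/
theorem stmt16 (g : Measure ℝ) [IsProbabilityMeasure g] (hg : g (Set.Iio 0) = 0)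
    (hunb : ∀ M : ℝ, 0 < M → 0 < g (Set.Ioi M)) :
    ∀ M : ℝ, 0 < M →
      Filter.Tendsto
        (fun k : ℕ =>
          (∫ x in Set.Ioi M, x ^ k * Real.exp (-x) ∂g) /
            (∫ x, x ^ k * Real.exp (-x) ∂g))
        Filter.atTop (nhds 1) := by
  intro M hM
  have h0 : ∀ᵐ x ∂g, 0 ≤ x := by
    rw [ae_iff]
    simp only [not_le]
    exact hg
  have hint := integrable_poisson_weight g h0
  have hexp : Integrable (fun x : ℝ => Real.exp (-x)) g := by simpa using hint 0
  have hnonneg : ∀ k : ℕ, 0 ≤ᵐ[g] fun x : ℝ => x ^ k * Real.exp (-x) := fun k => by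
    filter_upwards [h0] with x hx
    simp only [Pi.zero_apply]
    positivity
  set c : ℝ := ∫ x in Set.Ioi (2 * M), Real.exp (-x) ∂g with hc
  have hcpos : 0 < c := by
    have : NeZero (g.restrict (Set.Ioi (2 * M))) :=
      ⟨by simpa [Measure.restrict_eq_zero] using (hunb (2 * M) (by positivity)).ne'⟩
    exact integral_exp_pos hexp.integrableOn
  have hlow : ∀ k : ℕ, (2 * M) ^ k * c ≤ ∫ x, x ^ k * Real.exp (-x) ∂g := fun k => by
    refine le_trans ?_ (setIntegral_le_integral (s := Set.Ioi (2 * M)) (hint k) (hnonneg k))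
    rw [hc, ← integral_const_mul]
    refine setIntegral_mono_on (hexp.const_mul _).integrableOn (hint k).integrableOn
      measurableSet_Ioi fun x hx => ?_
    have : 2 * M ≤ x := le_of_lt hx
    gcongr
  have hup : ∀ k : ℕ, ∫ x in Set.Iic M, x ^ k * Real.exp (-x) ∂g ≤ M ^ k := fun k => by
    calc ∫ x in Set.Iic M, x ^ k * Real.exp (-x) ∂g
        ≤ ∫ _ in Set.Iic M, M ^ k ∂g := by
          refine setIntegral_mono_on_ae (hint k).integrableOn (integrable_const _).integrableOn
            measurableSet_Iic ?_
          filter_upwards [h0] with x hx hxM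
          have hxM : x ≤ M := hxM
          calc x ^ k * Real.exp (-x) ≤ M ^ k * 1 := by
                gcongr
                exact Real.exp_le_one_iff.2 (by linarith)
            _ = M ^ k := mul_one _
      _ ≤ ∫ _, M ^ k ∂g :=
          setIntegral_le_integral (integrable_const _)
            (Filter.Eventually.of_forall fun _ => by simp only [Pi.zero_apply]; positivity)
      _ = M ^ k := by simp
  have hpos : ∀ k : ℕ, 0 < ∫ x, x ^ k * Real.exp (-x) ∂g := fun k =>
    lt_of_lt_of_le (by positivity) (hlow k)
  have hsplit : ∀ k : ℕ, (∫ x in Set.Ioi M, x ^ k * Real.exp (-x) ∂g) /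
      (∫ x, x ^ k * Real.exp (-x) ∂g) = 1 - (∫ x in Set.Iic M, x ^ k * Real.exp (-x) ∂g) /
      (∫ x, x ^ k * Real.exp (-x) ∂g) := fun k => by
    have h := integral_add_compl (measurableSet_Iic (a := M)) (hint k)
    rw [Set.compl_Iic] at h
    rw [eq_sub_iff_add_eq, ← add_div, add_comm, h, div_self (hpos k).ne']
  have htail : Filter.Tendsto (fun k : ℕ => (∫ x in Set.Iic M, x ^ k * Real.exp (-x) ∂g) /
      (∫ x, x ^ k * Real.exp (-x) ∂g)) Filter.atTop (nhds 0) := by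
    have hgeom : Filter.Tendsto (fun k : ℕ => (1 / 2 : ℝ) ^ k / c) Filter.atTop (nhds 0) := by
      simpa using (tendsto_pow_atTop_nhds_zero_of_lt_one (r := (1 / 2 : ℝ))
        (by norm_num) (by norm_num)).div_const c
    refine squeeze_zero (fun k => div_nonneg
      (integral_nonneg_of_ae (ae_restrict_of_ae (hnonneg k))) (hpos k).le) (fun k => ?_) hgeom
    calc _ ≤ M ^ k / ((2 * M) ^ k * c) :=
          div_le_div₀ (by positivity) (hup k) (by positivity) (hlow k)
      _ = (1 / 2 : ℝ) ^ k / c := by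
          rw [mul_pow, div_pow, one_pow]
          field_simp
  simp_rw [hsplit]
  simpa using htail.const_sub 1
end
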